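/- arXiv:2502.15249 — 3 statements merged into one kernel-verified Lean document; each statement's English description precedes it below -/
import Mathlib

section
/- Let a, n be real numbers and b an integer, and set F(n,k) = (n + 2k + 2b) · ((a)_{k+b})^4 / ((1 + n − a)_{k+b})^4 for integers k ≥ 0. Define 𝓡(n,j) = (n−2a+1)^5 · (10a² − 8ab − 14aj − 14an − 6a + 2b² + 6bj + 6bn + 2b + 5j² + 10jn + 4j + 5n² + 4n + 1) / ((2n−4a+1)(2n−4a+2j+1)(n−a+1)^4). If a < (2n+1)/4, and all Pochhammer symbols appearing below are well defined and nonzero (no Gamma argument is a nonpositive integer) and 2n − 4a + 2j + 1 ≠ 0 for every integer j ≥ 0, then Σ_{k=0}^∞ F(n,k) = Σ_{j=0}^∞ (−1/4)^j · [((n−2a+2)_{j−1})^5 / ((n−2a+3/2)_{j−1} · ((n−a+2)_{j−1})^4)] · [((a)_b)^4 / ((n−a+j+1)_b)^4] · 𝓡(n,j), both series converging. -/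
/-!
The proof is a WZ (creative telescoping) argument. Let `T(n)` be the left-hand sum and
`w(n, k) = ((a)_{k+b} / (1+n-a)_{k+b})⁴`. With the certificate
`G(n, k) = w(n, k) · P(n, b + k) / (4 (n - 2a + 1/2))` (`mate`) and
`c(n) = -(n-2a+1)⁵ / (4 (n-2a+1/2) (n-a+1)⁴)` (`recC`), the summand `F` satisfies
`F(n, k) - c(n) F(n+1, k) = G(n, k) - G(n, k+1)`; dividing by `w(n, k)` turns this into a
polynomial identity (`wz_identity`). Since `w(n, k)` is of order `k ^ (4 (2a-1-n))`, the condition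
`a < (2n+1)/4` gives both the convergence of `T(n)` and `G(n, k) → 0`, hence
`T(n) = G(n, 0) + c(n) T(n+1)` (`lsum_rec`).

Iterating, with `Q_j = c(n) ⋯ c(n+j-1)`, gives
`Q_j G(n+j, 0) = Q_j T(n+j) - Q_{j+1} T(n+j+1)`. As `c(n+j) → -1/4` while a majorant of `|T(n+j)|`
grows at most by a factor `3` at each step, `Q_j T(n+j)` is summable, so these differences sum to
`T(n)` (`hasSum_accel`). Finally `Q_j G(n+j, 0)` is the right-hand summand (`coefQ_eq`).
-/

/-- The Pochhammer symbol with integer (possibly negative) index: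
`(x)_m = Γ(x + m) / Γ(x)`. -/
noncomputable def pochZ (x : ℝ) (m : ℤ) : ℝ := Real.Gamma (x + m) / Real.Gamma x

/-- `x` is not a nonpositive integer, i.e. `Γ(x)` is well defined (and nonzero). -/
def NotNonposInt (x : ℝ) : Prop := ∀ m : ℤ, m ≤ 0 → x ≠ (m : ℝ)

open Filter Topology Finset

/-! ### Pochhammer symbols and Gamma quotients -/

lemma NotNonposInt.add_nat {x : ℝ} (h : NotNonposInt x) (k : ℕ) : NotNonposInt (x + k) := by
  intro m hm hx
  refine h (m - k) (by omega) ?_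
  push_cast
  linarith

lemma NotNonposInt.ne_zero {x : ℝ} (h : NotNonposInt x) : x ≠ 0 := by
  simpa using h 0 le_rfl

lemma NotNonposInt.add_nat_ne_zero {x : ℝ} (h : NotNonposInt x) (k : ℕ) : x + k ≠ 0 :=
  (h.add_nat k).ne_zero

lemma NotNonposInt.gamma_ne_zero {x : ℝ} (h : NotNonposInt x) : Real.Gamma x ≠ 0 := by
  refine Real.Gamma_ne_zero fun m hx => h (-(m : ℤ)) (by omega) ?_
  push_cast
  exact hx

lemma pochZ_add_one (x : ℝ) (m : ℤ) (h : x + m ≠ 0) :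
    pochZ x (m + 1) = pochZ x m * (x + m) := by
  unfold pochZ
  push_cast
  rw [← add_assoc, Real.Gamma_add_one h]
  ring

lemma pochZ_base (x : ℝ) (m : ℤ) (hx : NotNonposInt x) (h : x + m ≠ 0) :
    pochZ (x + 1) m = pochZ x m * ((x + m) / x) := by
  unfold pochZ
  have h1 := hx.ne_zero
  have h2 := hx.gamma_ne_zero
  rw [show x + 1 + (m : ℝ) = (x + m) + 1 by ring, Real.Gamma_add_one h, Real.Gamma_add_one h1]
  field_simp

lemma pochZ_neg_one (x : ℝ) (hx : 0 < x) : pochZ (x + 1) (-1) = 1 / x := by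
  unfold pochZ
  have h2 := (Real.Gamma_pos_of_pos hx).ne'
  rw [Real.Gamma_add_one hx.ne']
  push_cast
  rw [show x + 1 + -1 = x by ring]
  field_simp

lemma gamma_add_nat (x : ℝ) (hx : NotNonposInt x) (k : ℕ) :
    Real.Gamma (x + k) = Real.Gamma x * ∏ j ∈ range k, (x + j) := by
  induction k with
  | zero => simp
  | succ k ih =>
    rw [prod_range_succ, ← mul_assoc, ← ih]
    push_cast
    rw [← add_assoc, Real.Gamma_add_one (hx.add_nat_ne_zero k)]
    ring

/-- The standard asymptotics `Γ(x + k) / Γ(y + k) ~ k ^ (x - y)`, from Euler's limit formula. -/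
lemma tendsto_gamma_ratio (x y : ℝ) (hx : NotNonposInt x) (hy : NotNonposInt y) :
    Tendsto (fun k : ℕ => Real.Gamma (x + (k + 1 : ℕ)) / Real.Gamma (y + (k + 1 : ℕ)) /
      (k : ℝ) ^ (x - y)) atTop (𝓝 1) := by
  have h1 := Real.GammaSeq_tendsto_Gamma x
  have h2 := Real.GammaSeq_tendsto_Gamma y
  have gx := hx.gamma_ne_zero
  have gy := hy.gamma_ne_zero
  have h3 := ((h2.div h1 gx).const_mul (Real.Gamma x / Real.Gamma y))
  have e : Real.Gamma x / Real.Gamma y * (Real.Gamma y / Real.Gamma x) = 1 := by field_simp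
  rw [e] at h3
  refine h3.congr' ?_
  filter_upwards [eventually_gt_atTop 0] with k hk
  have hk' : (0 : ℝ) < k := by exact_mod_cast hk
  have px : ∏ j ∈ range (k + 1), (x + j) ≠ 0 :=
    prod_ne_zero_iff.mpr fun j _ => hx.add_nat_ne_zero j
  have py : ∏ j ∈ range (k + 1), (y + j) ≠ 0 :=
    prod_ne_zero_iff.mpr fun j _ => hy.add_nat_ne_zero j
  have fk : (k.factorial : ℝ) ≠ 0 := by exact_mod_cast k.factorial_ne_zero
  have rx : (k : ℝ) ^ x ≠ 0 := (Real.rpow_pos_of_pos hk' x).ne'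
  have ry : (k : ℝ) ^ y ≠ 0 := (Real.rpow_pos_of_pos hk' y).ne'
  simp only [Pi.div_apply]
  rw [gamma_add_nat x hx, gamma_add_nat y hy, Real.rpow_sub hk', Real.GammaSeq, Real.GammaSeq]
  field_simp

/-! ### The summand and its asymptotics -/

/-- The hypergeometric weight `((a)_{k+b} / (1+n-a)_{k+b})⁴`. -/
noncomputable def wt (a : ℝ) (b : ℤ) (n : ℝ) (k : ℕ) : ℝ :=
  (pochZ a ((k : ℤ) + b) / pochZ (1 + n - a) ((k : ℤ) + b)) ^ 4

/-- The parameters for which the left-hand series is well defined and convergent; the conditions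
at `k = 0` imply those for all `k`. -/
structure Good (a : ℝ) (b : ℤ) (n : ℝ) : Prop where
  lt : a < (2 * n + 1) / 4
  h1 : NotNonposInt a
  h2 : NotNonposInt (a + b)
  h3 : NotNonposInt (1 + n - a)
  h4 : NotNonposInt (1 + n - a + b)

lemma Good.add_nat {a : ℝ} {b : ℤ} {n : ℝ} (h : Good a b n) (j : ℕ) : Good a b (n + j) where
  lt := by have := h.lt; have : (0 : ℝ) ≤ j := j.cast_nonneg; linarith
  h1 := h.h1
  h2 := h.h2
  h3 := by convert h.h3.add_nat j using 1; ring
  h4 := by convert h.h4.add_nat j using 1; ring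

lemma wt_nonneg (a : ℝ) (b : ℤ) (n : ℝ) (k : ℕ) : 0 ≤ wt a b n k :=
  Even.pow_nonneg (by decide) _

lemma wt_succ {a : ℝ} {b : ℤ} {n : ℝ} (h : Good a b n) (k : ℕ) :
    wt a b n (k + 1) = wt a b n k * ((a + b + k) / (1 + n - a + b + k)) ^ 4 := by
  have e1 := h.h2.add_nat_ne_zero k
  have e2 := h.h4.add_nat_ne_zero k
  unfold wt
  rw [show ((k + 1 : ℕ) : ℤ) + b = (k + b) + 1 by push_cast; ring, pochZ_add_one, pochZ_add_one,
    ← mul_pow]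
  · push_cast
    rw [mul_div_mul_comm, show a + ((k : ℝ) + b) = a + b + k by ring,
      show 1 + n - a + ((k : ℝ) + b) = 1 + n - a + b + k by ring]
  · push_cast; convert e2 using 1; ring
  · push_cast; convert e1 using 1; ring

lemma wt_shift {a : ℝ} {b : ℤ} {n : ℝ} (h : Good a b n) (k : ℕ) :
    wt a b (n + 1) k = wt a b n k * ((1 + n - a) / (1 + n - a + b + k)) ^ 4 := by
  have e2 := h.h4.add_nat_ne_zero k
  unfold wt
  rw [show 1 + (n + 1) - a = (1 + n - a) + 1 by ring, pochZ_base _ _ h.h3, ← mul_pow]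
  · push_cast
    rw [show 1 + n - a + ((k : ℝ) + b) = 1 + n - a + b + k by ring, ← div_div, div_div_eq_mul_div,
      mul_div_assoc]
  · push_cast; convert e2 using 1; ring

lemma tendsto_wt {a : ℝ} {b : ℤ} {n : ℝ} (h : Good a b n) :
    ∃ L : ℝ, Tendsto (fun k : ℕ => wt a b n (k + 1) / (k : ℝ) ^ (4 * (2 * a - 1 - n)))
      atTop (𝓝 L) := by
  refine ⟨_, (((tendsto_gamma_ratio _ _ h.h2 h.h4).pow 4).const_mul
    ((Real.Gamma (1 + n - a) / Real.Gamma a) ^ 4)).congr fun k => ?_⟩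
  have e : ((k : ℝ) ^ (a + b - (1 + n - a + b))) ^ 4 = (k : ℝ) ^ (4 * (2 * a - 1 - n)) := by
    rw [← Real.rpow_natCast, ← Real.rpow_mul k.cast_nonneg]
    congr 1
    push_cast
    ring
  have g1 := h.h1.gamma_ne_zero
  have g2 := h.h3.gamma_ne_zero
  have g3 := (h.h4.add_nat (k + 1)).gamma_ne_zero
  rw [div_pow _ ((k : ℝ) ^ _) 4, e]
  unfold wt pochZ
  push_cast at g3 ⊢
  rw [show a + ((k : ℝ) + 1 + b) = a + b + (k + 1) by ring,
    show 1 + n - a + ((k : ℝ) + 1 + b) = 1 + n - a + b + (k + 1) by ring]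
  field_simp

lemma summable_wt {a : ℝ} {b : ℤ} {n : ℝ} (h : Good a b n) (K : ℝ) :
    Summable fun k : ℕ => (K + 2 * k) * wt a b n k := by
  rw [← summable_nat_add_iff 1]
  obtain ⟨L, hL⟩ := tendsto_wt h
  have hs : Summable fun k : ℕ => (k : ℝ) ^ (1 + 4 * (2 * a - 1 - n)) :=
    Real.summable_nat_rpow.mpr (by have := h.lt; linarith)
  have hlin : Tendsto (fun k : ℕ => (K + 2) / (k : ℝ) + 2) atTop (𝓝 (0 + 2)) :=
    (tendsto_const_div_atTop_nhds_zero_nat _).add_const _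
  refine summable_of_isBigO_nat hs (Asymptotics.isBigO_of_div_tendsto_nhds ?_ _
    ((hlin.mul hL).congr' ?_))
  · filter_upwards [eventually_gt_atTop 0] with k hk h0
    exact absurd h0 (Real.rpow_pos_of_pos (by exact_mod_cast hk) _).ne'
  · filter_upwards [eventually_gt_atTop 0] with k hk
    have hk' : (0 : ℝ) < k := by exact_mod_cast hk
    have := (Real.rpow_pos_of_pos hk' (4 * (2 * a - 1 - n))).ne'
    simp only [Pi.div_apply]
    rw [Real.rpow_add hk', Real.rpow_one]
    push_cast
    field_simp
    ring

/-! ### The WZ identity and the recursion in `n` -/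

/-- The numerator polynomial of the WZ certificate. The polynomial of the right-hand series depends
on `n` and `j` only through `n + j`, which here is `s`; `m` takes the place of `b`. -/
noncomputable def certP (a s m : ℝ) : ℝ :=
  5 * s ^ 2 + (6 * m + 4 - 14 * a) * s + 10 * a ^ 2 - 8 * a * m - 6 * a + 2 * m ^ 2 + 2 * m + 1

/-- The WZ mate of the summand `(n + 2k + 2b) · wt a b n k`. -/
noncomputable def mate (a : ℝ) (b : ℤ) (n : ℝ) (k : ℕ) : ℝ :=
  wt a b n k * (certP a n (b + k) / (4 * (n - 2 * a + 1 / 2)))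

/-- The factor by which the sum at `n + 1` enters the recursion for the sum at `n`. -/
noncomputable def recC (a n : ℝ) : ℝ :=
  -1 / 4 * ((n - 2 * a + 1) ^ 5 / ((n - 2 * a + 1 / 2) * (n - a + 1) ^ 4))

/-- Dividing by the weight `wt a b n k` reduces the identity to the polynomial identity `key`. -/
lemma wz_identity {a : ℝ} {b : ℤ} {n : ℝ} (h : Good a b n) (k : ℕ) :
    (n + 2 * k + 2 * b) * wt a b n k - recC a n * ((n + 1 + 2 * k + 2 * b) * wt a b (n + 1) k)
      = mate a b n k - mate a b n (k + 1) := by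
  have e0 := h.h3.ne_zero
  have e2 := h.h4.add_nat_ne_zero k
  have e4 : 2 * n - 4 * a + 1 ≠ 0 := by have := h.lt; intro; linarith
  have key : 2 * (2 * n - 4 * a + 1) * (n + 2 * k + 2 * b) * (1 + n - a + b + k) ^ 4
      + (n - 2 * a + 1) ^ 5 * (n + 1 + 2 * k + 2 * b)
      = (1 + n - a + b + k) ^ 4 * certP a n (b + k)
        - (a + b + k) ^ 4 * certP a n (b + (k + 1 : ℕ)) := by
    unfold certP
    push_cast
    ring
  unfold mate recC
  rw [wt_succ h, wt_shift h, show n - a + 1 = 1 + n - a by ring,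
    show n - 2 * a + 1 / 2 = (2 * n - 4 * a + 1) / 2 by ring]
  generalize 1 + n - a + (b : ℝ) + k = y at *
  generalize 1 + n - a = p at *
  generalize 2 * n - 4 * a + 1 = d at *
  generalize certP a n (b + k) = P at *
  generalize certP a n (b + (k + 1 : ℕ)) = P' at *
  generalize (n - 2 * a + 1) ^ 5 = U at *
  generalize n + 1 + 2 * (k : ℝ) + 2 * b = N' at *
  generalize n + 2 * (k : ℝ) + 2 * b = N at *
  generalize a + (b : ℝ) + k = x at *
  generalize wt a b n k = w at *
  field_simp
  linear_combination 2 * w * key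

lemma tendsto_mate {a : ℝ} {b : ℤ} {n : ℝ} (h : Good a b n) :
    Tendsto (mate a b n) atTop (𝓝 0) := by
  rw [← tendsto_add_atTop_iff_nat 1]
  obtain ⟨L, hL⟩ := tendsto_wt h
  have hp : Tendsto (fun k : ℕ => (k : ℝ) ^ (-(2 * (2 * n + 1 - 4 * a)))) atTop (𝓝 0) :=
    (tendsto_rpow_neg_atTop (by have := h.lt; linarith)).comp tendsto_natCast_atTop_atTop
  have hi : Tendsto (fun k : ℕ => 1 / (k : ℝ)) atTop (𝓝 0) :=
    tendsto_const_div_atTop_nhds_zero_nat _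
  -- `certP a n (b + k + 1)` equals `2 k² + c₁ k + c₀` as a polynomial in `k`.
  have hq := (((hi.pow 2).const_mul (certP a n (b + 1))).add
    (hi.const_mul (6 * n - 8 * a + 4 * (b + 1) + 2))).add_const 2
  have := ((hp.mul hL).mul hq).mul_const (1 / (4 * (n - 2 * a + 1 / 2)))
  simp only [zero_mul] at this
  refine this.congr' ?_
  filter_upwards [eventually_gt_atTop 0] with k hk
  have hk' : (0 : ℝ) < k := by exact_mod_cast hk
  have r := (Real.rpow_pos_of_pos hk' (4 * (2 * a - 1 - n))).ne'
  rw [show -(2 * (2 * n + 1 - 4 * a)) = 2 + 4 * (2 * a - 1 - n) by ring, Real.rpow_add hk',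
    Real.rpow_two]
  unfold mate certP
  push_cast
  field_simp
  ring

/-- The left-hand sum as a function of `n`. -/
noncomputable def lsum (a : ℝ) (b : ℤ) (n : ℝ) : ℝ :=
  ∑' k : ℕ, (n + 2 * k + 2 * b) * wt a b n k

lemma hasSum_lsum {a : ℝ} {b : ℤ} {n : ℝ} (h : Good a b n) :
    HasSum (fun k : ℕ => (n + 2 * k + 2 * b) * wt a b n k) (lsum a b n) := by
  refine Summable.hasSum ((summable_wt h (n + 2 * b)).congr fun k => ?_)
  ring

/-- Summing the WZ identity over `k` telescopes to a first-order recursion in `n`. -/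
lemma lsum_rec {a : ℝ} {b : ℤ} {n : ℝ} (h : Good a b n) :
    lsum a b n - recC a n * lsum a b (n + 1) = mate a b n 0 := by
  have h' : Good a b (n + 1) := by simpa using h.add_nat 1
  have hs := (hasSum_lsum h).sub ((hasSum_lsum h').mul_left (recC a n))
  simp only [wz_identity h] at hs
  refine tendsto_nhds_unique hs.tendsto_sum_nat ?_
  simp only [sum_range_sub']
  simpa using (tendsto_mate h).const_sub (mate a b n 0)

/-! ### Decay of the remainder -/

lemma tendsto_shift_ratio (p q : ℝ) :
    Tendsto (fun j : ℕ => ((j : ℝ) + p) / (j + q)) atTop (𝓝 1) := by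
  have ht : Tendsto (fun j : ℕ => (j : ℝ) + q) atTop atTop :=
    tendsto_atTop_add_const_right _ _ tendsto_natCast_atTop_atTop
  have := (ht.const_div_atTop (p - q)).const_add 1
  rw [add_zero] at this
  refine this.congr' ?_
  filter_upwards [ht.eventually_gt_atTop 0] with j hj
  field_simp
  ring

lemma tendsto_recC (a n : ℝ) : Tendsto (fun j : ℕ => recC a (n + j)) atTop (𝓝 (-1 / 4)) := by
  have := (((tendsto_shift_ratio (n - 2 * a + 1) (n - a + 1)).pow 4).mul
    (tendsto_shift_ratio (n - 2 * a + 1) (n - 2 * a + 1 / 2))).const_mul (-1 / 4)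
  simp only [one_pow, mul_one] at this
  refine this.congr fun j => ?_
  unfold recC
  rw [div_pow, div_mul_div_comm]
  ring_nf

/-- The coefficient of `lsum a b (n + j)` after `j` steps of the recursion. -/
noncomputable def coefQ (a n : ℝ) (j : ℕ) : ℝ := ∏ i ∈ range j, recC a (n + i)

/-- A nonnegative majorant of `|lsum a b (n + j)|`. -/
noncomputable def maj (a : ℝ) (b : ℤ) (n : ℝ) (j : ℕ) : ℝ :=
  ∑' k : ℕ, (|n| + 2 * |(b : ℝ)| + 1 + j + 2 * k) * wt a b (n + j) k

lemma abs_lsum_le {a : ℝ} {b : ℤ} {n : ℝ} (h : Good a b n) (j : ℕ) :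
    |lsum a b (n + j)| ≤ maj a b n j := by
  unfold lsum maj
  rw [← Real.norm_eq_abs]
  refine tsum_of_norm_bounded (summable_wt (h.add_nat j) _).hasSum fun k => ?_
  rw [Real.norm_eq_abs, abs_mul, abs_of_nonneg (wt_nonneg _ _ _ _)]
  refine mul_le_mul_of_nonneg_right ?_ (wt_nonneg _ _ _ _)
  have hj : (0 : ℝ) ≤ j := j.cast_nonneg
  have hk : (0 : ℝ) ≤ k := k.cast_nonneg
  rw [abs_le]
  constructor <;> linarith [neg_abs_le n, neg_abs_le (b : ℝ), le_abs_self n, le_abs_self (b : ℝ)]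

lemma maj_nonneg (a : ℝ) (b : ℤ) (n : ℝ) (j : ℕ) : 0 ≤ maj a b n j :=
  tsum_nonneg fun k => mul_nonneg (by positivity) (wt_nonneg _ _ _ _)

/-- The majorant grows by a factor of at most `3` eventually: `2` from the linear factor, and
`3 / 2` from the weights, whose quotient is at most `((1+n+j-a) / (1+n+j-a+b))⁴ → 1`. -/
lemma maj_succ_le {a : ℝ} {b : ℤ} {n : ℝ} (h : Good a b n) :
    ∀ᶠ j : ℕ in atTop, maj a b n (j + 1) ≤ 3 * maj a b n j := by
  have h1 := (tendsto_shift_ratio (1 + n - a) (1 + n - a + b)).pow 4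
  have ht (q : ℝ) : Tendsto (fun j : ℕ => (j : ℝ) + q) atTop atTop :=
    tendsto_atTop_add_const_right _ _ tendsto_natCast_atTop_atTop
  filter_upwards [h1.eventually_le_const (show (1 : ℝ) ^ 4 < 3 / 2 by norm_num),
    (ht (1 + n - a)).eventually_gt_atTop 0, (ht (1 + n - a + b)).eventually_gt_atTop 0]
    with j hj hp hq
  unfold maj
  rw [← tsum_mul_left]
  refine Summable.tsum_le_tsum (fun k => ?_) (summable_wt (h.add_nat (j + 1)) _)
    ((summable_wt (h.add_nat j) _).mul_left 3)
  have hk : (0 : ℝ) ≤ k := k.cast_nonneg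
  have hw : wt a b (n + (j + 1 : ℕ)) k ≤ 3 / 2 * wt a b (n + j) k := by
    rw [show n + ((j + 1 : ℕ) : ℝ) = n + j + 1 by push_cast; ring, wt_shift (h.add_nat j), mul_comm]
    refine mul_le_mul_of_nonneg_right (le_trans ?_ hj) (wt_nonneg _ _ _ _)
    rw [show 1 + (n + (j : ℝ)) - a = j + (1 + n - a) by ring]
    refine pow_le_pow_left₀ (div_nonneg hp.le (by linarith)) ?_ 4
    exact div_le_div_of_nonneg_left hp.le hq (by linarith)
  have hw0 := wt_nonneg a b (n + j) k
  have hj0 : (0 : ℝ) ≤ j := j.cast_nonneg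
  have hn := abs_nonneg n
  have hb := abs_nonneg (b : ℝ)
  calc _ ≤ (2 * (|n| + 2 * |(b : ℝ)| + 1 + j + 2 * k)) * (3 / 2 * wt a b (n + j) k) := by
        refine mul_le_mul ?_ hw (wt_nonneg _ _ _ _) (by positivity)
        push_cast
        linarith
    _ = _ := by ring

lemma summable_coefQ_lsum {a : ℝ} {b : ℤ} {n : ℝ} (h : Good a b n) :
    Summable fun j : ℕ => coefQ a n j * lsum a b (n + j) := by
  have hs : Summable fun j : ℕ => |coefQ a n j| * maj a b n j := by
    refine summable_of_ratio_norm_eventually_le (r := 9 / 10) (by norm_num) ?_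
    have hc := (tendsto_recC a n).abs
    filter_upwards [maj_succ_le h, hc.eventually_le_const
      (show |(-1 / 4 : ℝ)| < 3 / 10 by rw [abs_lt]; norm_num)] with j h1 h2
    rw [Real.norm_of_nonneg (mul_nonneg (abs_nonneg _) (maj_nonneg _ _ _ _)),
      Real.norm_of_nonneg (mul_nonneg (abs_nonneg _) (maj_nonneg _ _ _ _)), coefQ,
      prod_range_succ, ← coefQ, abs_mul]
    have h0 := maj_nonneg a b n j
    have hq := abs_nonneg (coefQ a n j)
    calc _ ≤ |coefQ a n j| * (3 / 10) * (3 * maj a b n j) := by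
          refine mul_le_mul ?_ h1 (maj_nonneg _ _ _ _) (by positivity)
          gcongr
      _ = _ := by ring
  refine Summable.of_norm_bounded hs fun j => ?_
  rw [Real.norm_eq_abs, abs_mul]
  exact mul_le_mul_of_nonneg_left (abs_lsum_le h j) (abs_nonneg _)

/-! ### The accelerated series -/

lemma hasSum_accel {a : ℝ} {b : ℤ} {n : ℝ} (h : Good a b n) :
    HasSum (fun j : ℕ => coefQ a n j * mate a b (n + j) 0) (lsum a b n) := by
  have hs := summable_coefQ_lsum h
  have h1 := hs.hasSum
  have h2 := (hasSum_nat_add_iff' 1).mpr h1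
  have h3 := h1.sub h2
  simp only [range_one, sum_singleton, sub_sub_cancel] at h3
  have e0 : coefQ a n 0 * lsum a b (n + (0 : ℕ)) = lsum a b n := by simp [coefQ]
  rw [e0] at h3
  have e (j : ℕ) : coefQ a n j * mate a b (n + j) 0 =
      coefQ a n j * lsum a b (n + j) - coefQ a n (j + 1) * lsum a b (n + (j + 1 : ℕ)) := by
    rw [← lsum_rec (h.add_nat j), coefQ, coefQ, prod_range_succ]
    push_cast
    rw [← add_assoc]
    ring
  simpa only [e] using h3

lemma coef_zero_aux (u z t : ℝ) (hu : u ≠ 0) (hz : z ≠ 0) (ht : t ≠ 0) :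
    1 = (-1 / 4 : ℝ) ^ 0 * ((1 / u) ^ 5 / (1 / z * (1 / t) ^ 4)) * (u ^ 5 / (z * t ^ 4)) := by
  rw [pow_zero]
  field_simp

lemma coef_succ_aux (A B C u z t w R : ℝ) (j : ℕ) :
    w ^ j * (A ^ 5 / (B * C ^ 4)) * R * (w * (u ^ 5 / (z * t ^ 4))) =
      w ^ (j + 1) * ((A * u) ^ 5 / (B * z * (C * t) ^ 4)) * R := by
  ring

/-- The closed form of `coefQ`, which is the Pochhammer part of the right-hand summand. The index
`-1` at `j = 0` contributes `(x + 1)_{-1} = 1 / x`, cancelling the last factor. -/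
lemma coefQ_eq {a : ℝ} {b : ℤ} {n : ℝ} (h : Good a b n) (j : ℕ) :
    coefQ a n j = (-1/4 : ℝ) ^ j *
          ((pochZ (n - 2 * a + 2) ((j : ℤ) - 1)) ^ 5 /
            (pochZ (n - 2 * a + 3/2) ((j : ℤ) - 1) *
              (pochZ (n - a + 2) ((j : ℤ) - 1)) ^ 4)) *
          ((n - 2 * a + 1) ^ 5 / ((n - 2 * a + 1 / 2) * (n - a + 1) ^ 4)) := by
  have hl := h.lt
  have e3 := h.h3
  rw [show 1 + n - a = n - a + 1 by ring] at e3
  induction j with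
  | zero =>
    have p1 := pochZ_neg_one (n - 2 * a + 1) (by linarith)
    have p2 := pochZ_neg_one (n - 2 * a + 1 / 2) (by linarith)
    have g := e3.gamma_ne_zero
    have p3 : pochZ (n - a + 1 + 1) (-1) = 1 / (n - a + 1) := by
      unfold pochZ
      rw [Real.Gamma_add_one e3.ne_zero]
      push_cast
      rw [add_neg_cancel_right]
      have := e3.ne_zero
      field_simp
    have z1 : n - 2 * a + 1 ≠ 0 := by intro; linarith
    have z2 : n - 2 * a + 1 / 2 ≠ 0 := by intro; linarith
    have z3 := e3.ne_zero
    rw [show n - 2 * a + 2 = n - 2 * a + 1 + 1 by ring,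
      show n - 2 * a + 3 / 2 = n - 2 * a + 1 / 2 + 1 by ring,
      show n - a + 2 = n - a + 1 + 1 by ring]
    simp only [Nat.cast_zero, zero_sub, p1, p2, p3, coefQ, range_zero, prod_empty]
    exact coef_zero_aux _ _ _ z1 z2 z3
  | succ j ih =>
    have hj : (0 : ℝ) ≤ j := j.cast_nonneg
    have z3 := e3.add_nat_ne_zero j
    rw [coefQ, prod_range_succ, ← coefQ, ih,
      show ((j + 1 : ℕ) : ℤ) - 1 = ((j : ℤ) - 1) + 1 by push_cast; ring,
      pochZ_add_one, pochZ_add_one, pochZ_add_one, recC]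
    · push_cast
      rw [show n - 2 * a + 2 + ((j : ℝ) - 1) = n + j - 2 * a + 1 by ring,
        show n - 2 * a + 3 / 2 + ((j : ℝ) - 1) = n + j - 2 * a + 1 / 2 by ring,
        show n - a + 2 + ((j : ℝ) - 1) = n + j - a + 1 by ring]
      exact coef_succ_aux _ _ _ _ _ _ _ _ _
    · push_cast; convert z3 using 1; ring
    · push_cast; intro; linarith
    · push_cast; intro; linarith

/-- Three-parameter generalization of Guillera's formula of convergence rate `-1/4`
(Theorem 1 of the paper). -/
theorem three_param_guillera (a n : ℝ) (b : ℤ)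
    (ha : a < (2 * n + 1) / 4)
    -- the Pochhammer symbols in the left-hand series are well defined and nonzero
    (hbase₁ : NotNonposInt a) (hbase₂ : NotNonposInt (1 + n - a))
    (hL : ∀ k : ℕ, NotNonposInt (a + ((k : ℤ) + b : ℤ)) ∧
      NotNonposInt (1 + n - a + ((k : ℤ) + b : ℤ)))
    -- the Pochhammer symbols in the right-hand series are well defined and nonzero
    (hbase₃ : NotNonposInt (n - 2 * a + 2)) (hbase₄ : NotNonposInt (n - 2 * a + 3/2))
    (hbase₅ : NotNonposInt (n - a + 2))
    (hR : ∀ j : ℕ, NotNonposInt (n - 2 * a + 2 + ((j : ℤ) - 1 : ℤ)) ∧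
      NotNonposInt (n - 2 * a + 3/2 + ((j : ℤ) - 1 : ℤ)) ∧
      NotNonposInt (n - a + 2 + ((j : ℤ) - 1 : ℤ)) ∧
      NotNonposInt (n - a + (j : ℝ) + 1) ∧
      NotNonposInt (n - a + (j : ℝ) + 1 + (b : ℤ)))
    -- the denominator factors are nonzero
    (hden : ∀ j : ℕ, 2 * n - 4 * a + 2 * (j : ℝ) + 1 ≠ 0) :
    ∃ S : ℝ,
      HasSum (fun k : ℕ =>
        (n + 2 * (k : ℝ) + 2 * (b : ℝ)) * (pochZ a ((k : ℤ) + b)) ^ 4 /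
          (pochZ (1 + n - a) ((k : ℤ) + b)) ^ 4) S ∧
      HasSum (fun j : ℕ =>
        (-1/4 : ℝ) ^ j *
          ((pochZ (n - 2 * a + 2) ((j : ℤ) - 1)) ^ 5 /
            (pochZ (n - 2 * a + 3/2) ((j : ℤ) - 1) *
              (pochZ (n - a + 2) ((j : ℤ) - 1)) ^ 4)) *
          ((pochZ a b) ^ 4 / (pochZ (n - a + (j : ℝ) + 1) b) ^ 4) *
          ((n - 2 * a + 1) ^ 5 *
            (10 * a ^ 2 - 8 * a * (b : ℝ) - 14 * a * (j : ℝ) - 14 * a * n - 6 * a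
              + 2 * (b : ℝ) ^ 2 + 6 * (b : ℝ) * (j : ℝ) + 6 * (b : ℝ) * n + 2 * (b : ℝ)
              + 5 * (j : ℝ) ^ 2 + 10 * (j : ℝ) * n + 4 * (j : ℝ)
              + 5 * n ^ 2 + 4 * n + 1) /
            ((2 * n - 4 * a + 1) * (2 * n - 4 * a + 2 * (j : ℝ) + 1) *
              (n - a + 1) ^ 4))) S := by
  have hg : Good a b n := ⟨ha, hbase₁, by simpa using (hL 0).1, hbase₂, by simpa using (hL 0).2⟩
  refine ⟨lsum a b n, ?_, ?_⟩
  · convert hasSum_lsum hg using 2 with k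
    rw [wt, div_pow]
    ring
  · convert hasSum_accel hg using 2 with j
    have e1 : 2 * n - 4 * a + 1 ≠ 0 := by intro; linarith
    have e2 := hden j
    have e3 : n - a + 1 ≠ 0 := by convert hbase₂.ne_zero using 1; ring
    have eP : certP a (n + j) (b + (0 : ℕ)) =
        10 * a ^ 2 - 8 * a * (b : ℝ) - 14 * a * (j : ℝ) - 14 * a * n - 6 * a
              + 2 * (b : ℝ) ^ 2 + 6 * (b : ℝ) * (j : ℝ) + 6 * (b : ℝ) * n + 2 * (b : ℝ)
              + 5 * (j : ℝ) ^ 2 + 10 * (j : ℝ) * n + 4 * (j : ℝ)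
              + 5 * n ^ 2 + 4 * n + 1 := by
      unfold certP
      push_cast
      ring
    rw [coefQ_eq hg, mate, wt, eP, div_pow (pochZ a _),
      show 1 + (n + (j : ℝ)) - a = n - a + j + 1 by ring,
      show n + (j : ℝ) - 2 * a + 1 / 2 = (2 * n - 4 * a + 2 * j + 1) / 2 by ring,
      show n - 2 * a + 1 / 2 = (2 * n - 4 * a + 1) / 2 by ring, Nat.cast_zero, zero_add]
    rw [show (4 : ℝ) * ((2 * n - 4 * a + 2 * j + 1) / 2) = 2 * (2 * n - 4 * a + 2 * j + 1) by ring]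
    have aux (A B w U P d d' p : ℝ) (hd : d ≠ 0) (hd' : d' ≠ 0) (hp : p ≠ 0) :
        w * A * B * (U ^ 5 * P / (d * d' * p ^ 4)) =
          w * A * (U ^ 5 / (d / 2 * p ^ 4)) * (B * (P / (2 * d'))) := by
      field_simp
    exact aux _ _ _ _ _ _ _ _ e1 e2 e3
end

section
/- The series Σ_{k=0}^∞ (−1/4)^k · ((3/2)_k)^5 / (((1)_k)^4 · (2)_k) · (20k² + 24k + 9) converges and equals −64/π². -/
/-!
Write `n = k + 1`. The `k`-th term is `-128 tₙ n⁴ (20 n² - 16 n + 5)`, where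
`tₙ = (-1/4)ⁿ (1/2)ₙ⁵ / n!⁵`, and this differs from `-8 tₙ (20 n² + 8 n + 1)` by the telescoping
difference of `-128 n⁵ (24 - 16 n) tₙ` (`kernel_telescope`). The claim therefore reduces to Guillera's
series `∑ tₙ (20 n² + 8 n + 1) = 8 / π²`.

That series is evaluated by the WZ method. With
`B(n, k) = (-1/4)ⁿ (1/2)ₙ⁵ (1/2)ₖ⁴ / (n! (n + k)!⁴)`, the functions
`G = B · (20 n² + 8 n + 1 + 24 k n + 8 k² + 4 k)` and `F = B · 8 n (2 n + 4 k + 1)` satisfy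
`G(n, k + 1) - G(n, k) = F(n + 1, k) - F(n, k)` (`wz_pair`). As `F(0, k) = 0` and `F(·, k)` is summable,
`∑ₙ G(n, k)` is independent of `k` (`tsum_wzG_eq`). As `k → ∞` only the term `n = 0` survives,
by dominated convergence, and `G(0, k) = ((1/2)ₖ / k!)⁴ (8 k² + 4 k + 1) → 8 / π²` by Wallis' product.
-/

/-- The Pochhammer symbol `(x)_k = x (x+1) ⋯ (x+k-1) = Γ(x+k)/Γ(x)`. -/
noncomputable def poch (x : ℝ) (k : ℕ) : ℝ := ∏ i ∈ Finset.range k, (x + i)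

open Filter Topology

lemma poch_zero (x : ℝ) : poch x 0 = 1 := by simp [poch]

lemma poch_succ (x : ℝ) (k : ℕ) : poch x (k + 1) = poch x k * (x + k) := by
  simp [poch, Finset.prod_range_succ]

lemma poch_half_pos (k : ℕ) : 0 < poch (1/2) k :=
  Finset.prod_pos fun i _ => by positivity

lemma poch_one (k : ℕ) : poch 1 k = k.factorial := by
  induction k with
  | zero => simp [poch_zero]
  | succ k ih => rw [poch_succ, ih, Nat.factorial_succ]; push_cast; ring

lemma poch_two (k : ℕ) : poch 2 k = (k + 1).factorial := by
  induction k with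
  | zero => simp [poch_zero]
  | succ k ih => rw [poch_succ, ih, Nat.factorial_succ (k + 1)]; push_cast; ring

lemma poch_three_half (k : ℕ) : poch (3/2) k = 2 * poch (1/2) (k + 1) := by
  induction k with
  | zero => simp [poch_zero, poch_succ]
  | succ k ih => rw [poch_succ, ih, poch_succ _ (k + 1)]; push_cast; ring

/-- The hypergeometric kernel `B(n, k)` of the WZ pair. -/
noncomputable def wzB (n k : ℕ) : ℝ :=
  (-1/4) ^ n * poch (1/2) n ^ 5 * poch (1/2) k ^ 4 / (n.factorial * ((n + k).factorial : ℝ) ^ 4)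

/-- The summand `G(n, k)` whose sum over `n` does not depend on `k`. -/
noncomputable def wzG (n k : ℕ) : ℝ :=
  wzB n k * (20 * (n:ℝ) ^ 2 + 8 * n + 1 + 24 * k * n + 8 * (k:ℝ) ^ 2 + 4 * k)

/-- The WZ mate `F(n, k)` of `G(n, k)`. -/
noncomputable def wzF (n k : ℕ) : ℝ := wzB n k * (8 * n * (2 * n + 4 * k + 1))

lemma wzB_succ_left (n k : ℕ) :
    wzB (n + 1) k = wzB n k * (-(1/4) * (n + 1/2) ^ 5 / ((n + 1) * ((n:ℝ) + k + 1) ^ 4)) := by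
  unfold wzB
  rw [poch_succ, show n + 1 + k = (n + k) + 1 by ring, Nat.factorial_succ, Nat.factorial_succ,
    pow_succ]
  have h1 : (n.factorial : ℝ) ≠ 0 := by positivity
  have h2 : ((n + k).factorial : ℝ) ≠ 0 := by positivity
  have h3 : (n : ℝ) + k + 1 ≠ 0 := by positivity
  push_cast
  field_simp
  ring

lemma wzB_succ_right (n k : ℕ) :
    wzB n (k + 1) = wzB n k * ((k + 1/2) ^ 4 / ((n:ℝ) + k + 1) ^ 4) := by
  unfold wzB
  rw [poch_succ, show n + (k + 1) = (n + k) + 1 by ring, Nat.factorial_succ]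
  have h1 : (n.factorial : ℝ) ≠ 0 := by positivity
  have h2 : ((n + k).factorial : ℝ) ≠ 0 := by positivity
  have h3 : (n : ℝ) + k + 1 ≠ 0 := by positivity
  push_cast
  field_simp
  ring

lemma wz_pair (n k : ℕ) : wzG n (k + 1) - wzG n k = wzF (n + 1) k - wzF n k := by
  unfold wzG wzF
  rw [wzB_succ_left, wzB_succ_right]
  have h3 : (n : ℝ) + k + 1 ≠ 0 := by positivity
  have h4 : (n : ℝ) + 1 ≠ 0 := by positivity
  push_cast
  field_simp
  ring

lemma kernel_telescope (n : ℕ) :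
    wzB n 0 * ((n:ℝ) ^ 4 * (20 * (n:ℝ) ^ 2 - 16 * n + 5)) =
      1/16 * wzG n 0 + (wzB (n + 1) 0 * (((n + 1 : ℕ) : ℝ) ^ 5 * (24 - 16 * ((n + 1 : ℕ) : ℝ)))
        - wzB n 0 * ((n:ℝ) ^ 5 * (24 - 16 * n))) := by
  unfold wzG
  rw [wzB_succ_left]
  have h4 : (n : ℝ) + 1 ≠ 0 := by positivity
  push_cast
  simp only [add_zero]
  field_simp
  ring

/-- Half of Wallis' estimate: `((1/2)ₖ / k!)² ≤ 1 / (2k + 1)`. -/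
lemma poch_half_sq_le (k : ℕ) :
    poch (1/2) k ^ 2 * (2 * k + 1) ≤ (k.factorial : ℝ) ^ 2 := by
  induction k with
  | zero => simp [poch_zero]
  | succ k ih =>
    rw [poch_succ, Nat.factorial_succ]
    push_cast
    have h : (1/2 + (k:ℝ)) ^ 2 * (2 * (k + 1) + 1) ≤ (2 * k + 1) * (k + 1) ^ 2 := by
      nlinarith [(k.cast_nonneg : (0:ℝ) ≤ k)]
    calc (poch (1/2) k * (1/2 + k)) ^ 2 * (2 * ((k:ℝ) + 1) + 1)
        = poch (1/2) k ^ 2 * ((1/2 + (k:ℝ)) ^ 2 * (2 * (k + 1) + 1)) := by ring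
      _ ≤ poch (1/2) k ^ 2 * ((2 * k + 1) * (k + 1) ^ 2) := by gcongr
      _ = (poch (1/2) k ^ 2 * (2 * k + 1)) * (k + 1) ^ 2 := by ring
      _ ≤ (k.factorial : ℝ) ^ 2 * (k + 1) ^ 2 := by gcongr
      _ = _ := by ring

lemma poch_half_le (k : ℕ) : poch (1/2) k ≤ k.factorial := by
  rw [← poch_one]
  exact Finset.prod_le_prod (fun i _ => by positivity) (fun i _ => by gcongr; norm_num)

lemma abs_wzB (n k : ℕ) :
    |wzB n k| = (1/4) ^ n * poch (1/2) n ^ 5 * poch (1/2) k ^ 4 /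
      (n.factorial * ((n + k).factorial : ℝ) ^ 4) := by
  have h1 := poch_half_pos n
  have h2 := poch_half_pos k
  unfold wzB
  rw [abs_div, abs_mul, abs_mul, abs_pow, abs_of_pos (pow_pos h1 5), abs_of_pos (pow_pos h2 4),
    abs_of_pos (by positivity : (0:ℝ) < n.factorial * ((n + k).factorial : ℝ) ^ 4)]
  norm_num

/-- A bound by `(1/4)ⁿ`, uniform in `k` even after multiplication by `k²`. -/
lemma abs_wzB_mul_le (n k : ℕ) : |wzB n k| * (2 * k + 1) ^ 2 ≤ (1/4) ^ n := by
  have h1 := poch_half_pos n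
  have h2 := poch_half_pos k
  rw [abs_wzB, div_mul_eq_mul_div, div_le_iff₀ (by positivity)]
  have hf : (n.factorial : ℝ) * k.factorial ≤ (n + k).factorial := by
    exact_mod_cast Nat.le_of_dvd (Nat.factorial_pos _) (Nat.factorial_mul_factorial_dvd_factorial_add n k)
  calc (1/4 : ℝ) ^ n * poch (1/2) n ^ 5 * poch (1/2) k ^ 4 * (2 * k + 1) ^ 2
      = (1/4) ^ n * poch (1/2) n ^ 5 * (poch (1/2) k ^ 2 * (2 * k + 1)) ^ 2 := by ring
    _ ≤ (1/4) ^ n * (n.factorial : ℝ) ^ 5 * ((k.factorial : ℝ) ^ 2) ^ 2 := by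
        gcongr
        · exact poch_half_le n
        · exact poch_half_sq_le k
    _ = (1/4) ^ n * (n.factorial * (n.factorial * k.factorial : ℝ) ^ 4) := by ring
    _ ≤ _ := by gcongr

lemma abs_wzB_le (n k : ℕ) : |wzB n k| ≤ (1/4) ^ n := by
  refine le_trans ?_ (abs_wzB_mul_le n k)
  refine le_mul_of_one_le_right (abs_nonneg _) (one_le_pow₀ ?_)
  linarith [(k.cast_nonneg : (0:ℝ) ≤ k)]

lemma summable_wzB_mul_pow (k j : ℕ) : Summable fun n => wzB n k * (n:ℝ) ^ j := by
  have h := summable_pow_mul_geometric_of_norm_lt_one j (r := (1/4 : ℝ)) (by norm_num)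
  refine Summable.of_norm_bounded h fun n => ?_
  rw [Real.norm_eq_abs, abs_mul, abs_of_nonneg (by positivity : (0:ℝ) ≤ (n:ℝ) ^ j), mul_comm]
  gcongr
  exact abs_wzB_le n k

lemma summable_wzG (k : ℕ) : Summable fun n => wzG n k := by
  have h := (((summable_wzB_mul_pow k 2).mul_left 20).add
    ((summable_wzB_mul_pow k 1).mul_left (8 + 24 * (k:ℝ)))).add
    ((summable_wzB_mul_pow k 0).mul_left (1 + 8 * (k:ℝ) ^ 2 + 4 * k))
  refine h.congr fun n => ?_
  unfold wzG
  ring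

lemma summable_wzF (k : ℕ) : Summable fun n => wzF n k := by
  have h := ((summable_wzB_mul_pow k 2).mul_left 16).add
    ((summable_wzB_mul_pow k 1).mul_left (32 * (k:ℝ) + 8))
  refine h.congr fun n => ?_
  unfold wzF
  ring

lemma hasSum_telescope {f : ℕ → ℝ} (hf : Summable f) :
    HasSum (fun n => f (n + 1) - f n) (-f 0) := by
  have h := ((hasSum_nat_add_iff' 1).2 hf.hasSum).sub hf.hasSum
  simpa using h

lemma tsum_wzG_eq (k : ℕ) : ∑' n, wzG n k = ∑' n, wzG n 0 := by
  induction k with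
  | zero => rfl
  | succ k ih =>
    rw [← ih, ← sub_eq_zero, ← (summable_wzG (k + 1)).tsum_sub (summable_wzG k)]
    simp only [wz_pair]
    rw [(hasSum_telescope (summable_wzF k)).tsum_eq]
    simp [wzF]

lemma wallis_eq (k : ℕ) :
    Real.Wallis.W k * (poch (1/2) k ^ 2 * (2 * k + 1)) = (k.factorial : ℝ) ^ 2 := by
  induction k with
  | zero => simp [poch_zero, Real.Wallis.W]
  | succ k ih =>
    rw [Real.Wallis.W_succ, poch_succ, Nat.factorial_succ]
    push_cast
    rw [mul_pow ((k:ℝ) + 1), ← ih]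
    field_simp
    ring

lemma tendsto_wzG_zero : Tendsto (fun k => wzG 0 k) atTop (𝓝 (8 / Real.pi ^ 2)) := by
  have hW := Real.Wallis.tendsto_W_nhds_pi_div_two
  have hinv : Tendsto (fun k : ℕ => (1 / (2 * (k:ℝ) + 1))) atTop (𝓝 0) := by
    have h := (tendsto_one_div_add_atTop_nhds_zero_nat (𝕜 := ℝ))
    refine squeeze_zero (fun k => by positivity) (fun k => ?_) h
    gcongr
    linarith [(k.cast_nonneg : (0:ℝ) ≤ k)]
  -- The coefficients come from `8k² + 4k + 1 = 2 (2k+1)² - 2 (2k+1) + 1`.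
  have hlim := ((hW.inv₀ (by positivity)).pow 2).mul
    (((tendsto_const_nhds (x := (2:ℝ))).sub (hinv.const_mul 2)).add (hinv.pow 2))
  have e : ((Real.pi / 2)⁻¹ ^ 2 * (2 - 2 * 0 + 0 ^ 2)) = 8 / Real.pi ^ 2 := by
    field_simp
    ring
  rw [e] at hlim
  refine hlim.congr fun k => ?_
  have hw := wallis_eq k
  have h2 := poch_half_pos k
  have hWp := Real.Wallis.W_pos k
  have hB : wzG 0 k = poch (1/2) k ^ 4 / ((k.factorial : ℝ) ^ 2) ^ 2 *
      (8 * (k:ℝ) ^ 2 + 4 * k + 1) := by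
    unfold wzG wzB
    simp [poch_zero]
    ring
  rw [hB, ← hw]
  field_simp
  ring

lemma wzG_poly_le (n k : ℕ) :
    20 * (n:ℝ) ^ 2 + 8 * n + 1 + 24 * k * n + 8 * (k:ℝ) ^ 2 + 4 * k ≤
      65 * ((n + 1) ^ 2 * (2 * k + 1) ^ 2) := by
  have hn : (0:ℝ) ≤ n := n.cast_nonneg
  have hk : (0:ℝ) ≤ k := k.cast_nonneg
  rw [← sub_nonneg]
  ring_nf
  positivity

/-- Compared with `B(n, k)`, the kernel `B(n + 1, k)` carries a factor `(n + k + 1)⁻⁴`, so all terms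
of positive index disappear as `k → ∞`. -/
lemma tendsto_wzG_succ (n : ℕ) : Tendsto (fun k => wzG (n + 1) k) atTop (𝓝 0) := by
  have h := (tendsto_one_div_add_atTop_nhds_zero_nat (𝕜 := ℝ)).const_mul
    (1/4 * ((n:ℝ) + 1/2) ^ 5 * (65 * ((n + 1 : ℕ) + 1 : ℝ) ^ 2))
  rw [mul_zero] at h
  refine squeeze_zero_norm (fun k => ?_) h
  have hB : |wzB n k| * (2 * k + 1) ^ 2 ≤ 1 :=
    (abs_wzB_mul_le n k).trans (pow_le_one₀ (by norm_num) (by norm_num))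
  have hn : (0:ℝ) ≤ n := n.cast_nonneg
  have hk : (0:ℝ) ≤ k := k.cast_nonneg
  have hd : (k:ℝ) + 1 ≤ (n + 1) * ((n:ℝ) + k + 1) ^ 4 := by
    calc (k:ℝ) + 1 ≤ (n:ℝ) + k + 1 := by linarith
      _ ≤ ((n:ℝ) + k + 1) ^ 4 := le_self_pow₀ (by linarith) (by norm_num)
      _ ≤ _ := le_mul_of_one_le_left (by positivity) (by linarith)
  unfold wzG
  rw [wzB_succ_left, Real.norm_eq_abs, abs_mul, abs_mul, abs_div, abs_mul, abs_neg,
    abs_of_nonneg (by positivity : (0:ℝ) ≤ 1/4),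
    abs_of_nonneg (by positivity : (0:ℝ) ≤ ((n:ℝ) + 1/2) ^ 5),
    abs_of_nonneg (by positivity : (0:ℝ) ≤ (n + 1) * ((n:ℝ) + k + 1) ^ 4),
    abs_of_nonneg (by positivity : (0:ℝ) ≤ 20 * ((n + 1 : ℕ):ℝ) ^ 2 + 8 * (n + 1 : ℕ) + 1
      + 24 * k * (n + 1 : ℕ) + 8 * (k:ℝ) ^ 2 + 4 * k)]
  calc _ ≤ |wzB n k| * (1/4 * ((n:ℝ) + 1/2) ^ 5 / (k + 1)) *
        (65 * (((n + 1 : ℕ) + 1 : ℝ) ^ 2 * (2 * k + 1) ^ 2)) := by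
        gcongr
        exact wzG_poly_le (n + 1) k
    _ = (|wzB n k| * (2 * k + 1) ^ 2) * (1/4 * ((n:ℝ) + 1/2) ^ 5 *
        (65 * ((n + 1 : ℕ) + 1 : ℝ) ^ 2) * (1 / (k + 1))) := by ring
    _ ≤ _ := mul_le_of_le_one_left (by positivity) hB

lemma hasSum_guillera : HasSum (fun n => wzG n 0) (8 / Real.pi ^ 2) := by
  have hs : Summable fun n : ℕ => 65 * (((n:ℝ) + 1) ^ 2 * (1/4 : ℝ) ^ n) := by
    have h (j : ℕ) := summable_pow_mul_geometric_of_norm_lt_one j (r := (1/4 : ℝ)) (by norm_num)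
    refine ((((h 2).add ((h 1).mul_left 2)).add (h 0)).mul_left 65).congr fun n => ?_
    ring
  have hlim := tendsto_tsum_of_dominated_convergence (𝓕 := atTop)
    (f := fun k n => wzG n k) (g := fun n : ℕ => if n = 0 then 8 / Real.pi ^ 2 else 0) hs
    (fun n => by
      cases n with
      | zero => simpa using tendsto_wzG_zero
      | succ n => simpa using tendsto_wzG_succ n)
    (Eventually.of_forall fun k n => by
      have hn : (0:ℝ) ≤ n := n.cast_nonneg
      have hk : (0:ℝ) ≤ k := k.cast_nonneg
      have hB := abs_wzB_mul_le n k
      unfold wzG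
      rw [Real.norm_eq_abs, abs_mul, abs_of_nonneg (by positivity :
        (0:ℝ) ≤ 20 * (n:ℝ) ^ 2 + 8 * n + 1 + 24 * k * n + 8 * (k:ℝ) ^ 2 + 4 * k)]
      calc |wzB n k| * (20 * (n:ℝ) ^ 2 + 8 * n + 1 + 24 * k * n + 8 * (k:ℝ) ^ 2 + 4 * k)
          ≤ |wzB n k| * (65 * ((n + 1) ^ 2 * (2 * k + 1) ^ 2)) := by
            gcongr
            exact wzG_poly_le n k
        _ = 65 * ((n + 1) ^ 2 * (|wzB n k| * (2 * k + 1) ^ 2)) := by ring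
        _ ≤ _ := by gcongr)
  simp only [tsum_wzG_eq, tsum_ite_eq] at hlim
  rw [tendsto_nhds_unique hlim tendsto_const_nhds]
  exact (summable_wzG 0).hasSum

theorem series_motivating :
    HasSum
      (fun k : ℕ =>
        (-1/4 : ℝ) ^ k * (poch (3/2) k) ^ 5 / ((poch 1 k) ^ 4 * poch 2 k) *
          (20 * (k : ℝ) ^ 2 + 24 * k + 9))
      (-64 / Real.pi ^ 2) := by
  have hH : Summable fun n : ℕ => wzB n 0 * ((n:ℝ) ^ 5 * (24 - 16 * n)) := by
    refine (((summable_wzB_mul_pow 0 5).mul_left 24).sub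
      ((summable_wzB_mul_pow 0 6).mul_left 16)).congr fun n => ?_
    ring
  have h := (((hasSum_guillera.mul_left (1/16)).add (hasSum_telescope hH)).congr_fun
    kernel_telescope).mul_left (-128)
  have h' := (hasSum_nat_add_iff' 1).2 h
  have e : -128 * (1/16 * (8 / Real.pi ^ 2) + -(wzB 0 0 * (((0 : ℕ) : ℝ) ^ 5 *
      (24 - 16 * ((0 : ℕ) : ℝ))))) - ∑ i ∈ Finset.range 1, -128 * (wzB i 0 * ((i : ℝ) ^ 4 *
      (20 * (i : ℝ) ^ 2 - 16 * i + 5))) = -64 / Real.pi ^ 2 := by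
    simp
    ring
  rw [e] at h'
  refine h'.congr_fun fun k => ?_
  rw [poch_one, poch_two, poch_three_half]
  unfold wzB
  rw [poch_zero, Nat.add_zero, Nat.factorial_succ, pow_succ]
  have h1 : (k.factorial : ℝ) ≠ 0 := by positivity
  push_cast
  field_simp
  ring
end

section
/- The series Σ_{k=0}^∞ (−1/1024)^k · ((−1/2)_k)^3 · ((1/2)_k)^2 / ((1)_k)^5 · (6560k⁵ − 528k⁴ + 176k³ + 8k² − 6k − 1) converges and equals −8/π². -/
open Filter Topology Nat

namespace DougallWZ

lemma factorial_ne (n : ℕ) : (n ! : ℝ) ≠ 0 := by positivity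

lemma poch_succ (x : ℝ) (k : ℕ) : poch x (k + 1) = poch x k * (x + k) := by
  simp [poch, Finset.prod_range_succ]

lemma poch_zero (x : ℝ) : poch x 0 = 1 := by simp [poch]

lemma poch_pos {x : ℝ} (hx : 0 < x) (k : ℕ) : 0 < poch x k :=
  Finset.prod_pos fun i _ => by positivity

lemma poch_one (k : ℕ) : poch 1 k = (k ! : ℝ) := by
  induction k with
  | zero => simp [poch_zero]
  | succ k ih => rw [poch_succ, ih, factorial_succ]; push_cast; ring

lemma poch_half_eq (n : ℕ) : poch (1 / 2) n = -(2 * n - 1) * poch (-1 / 2) n := by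
  induction n with
  | zero => simp [poch_zero]
  | succ n ih => rw [poch_succ, poch_succ, ih]; push_cast; ring

lemma poch_three_halves_eq (n : ℕ) : poch (3 / 2) n = (2 * n + 1) * poch (1 / 2) n := by
  induction n with
  | zero => simp [poch_zero]
  | succ n ih => rw [poch_succ, poch_succ, ih]; push_cast; ring

lemma factorial_two_mul (n : ℕ) : ((2 * n)! : ℝ) = 4 ^ n * poch (1 / 2) n * n ! := by
  induction n with
  | zero => simp [poch_zero]
  | succ n ih =>
    rw [show 2 * (n + 1) = 2 * n + 1 + 1 by ring, factorial_succ, factorial_succ, poch_succ,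
      factorial_succ]
    push_cast
    rw [ih]; ring

lemma abs_poch_neg_half_le (j : ℕ) : |poch (-1 / 2) j| ≤ j ! / (j + 1) := by
  induction j with
  | zero => simp [poch_zero]
  | succ j ih =>
    rw [poch_succ, abs_mul, factorial_succ]
    push_cast
    have h1 : |(-1 / 2 + j : ℝ)| ≤ (j + 1) ^ 2 / (j + 2) := by
      rw [le_div_iff₀ (by positivity)]
      have hj : (0 : ℝ) ≤ j := by positivity
      rcases abs_cases (-1 / 2 + j : ℝ) with ⟨h, _⟩ | ⟨h, _⟩ <;> rw [h] <;> nlinarith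
    calc _ ≤ (j ! / (j + 1) : ℝ) * ((j + 1) ^ 2 / (j + 2)) := by gcongr
      _ = _ := by field_simp; ring

lemma poch_half_le (j : ℕ) : poch (1 / 2) j ≤ j ! := by
  rw [← poch_one]
  refine Finset.prod_le_prod (fun i _ => by positivity) fun i _ => by linarith

/-- Summing a WZ relation over `k` leaves only the boundary value of the companion at `k = 0`. -/
lemma tsum_succ_sub {f f' g : ℕ → ℝ} (hf : Summable f) (hf' : Summable f')
    (h : ∀ k, f' k - f k = g (k + 1) - g k) (hg : Tendsto g atTop (𝓝 0)) :
    ∑' k, f' k - ∑' k, f k = -g 0 := by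
  have h1 : HasSum (fun k => f' k - f k) (∑' k, f' k - ∑' k, f k) := hf'.hasSum.sub hf.hasSum
  have h2 := h1.tendsto_sum_nat
  simp only [h, Finset.sum_range_sub] at h2
  exact tendsto_nhds_unique h2 (by simpa using hg.sub_const (g 0))

lemma summable_cube : Summable fun k : ℕ => (1 : ℝ) / (k + 1) ^ 3 := by
  have := (summable_nat_add_iff 1).2 (Real.summable_one_div_nat_pow.2 (by norm_num : 1 < 3))
  simpa using this

lemma tendsto_const_div_sq (c : ℝ) : Tendsto (fun k : ℕ => c / ((k : ℝ) + 1) ^ 2) atTop (𝓝 0) := by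
  have h := (tendsto_one_div_add_atTop_nhds_zero_nat (𝕜 := ℝ)).pow 2
  have := h.const_mul c
  simpa [div_eq_mul_inv] using this

/-! ### Dougall's sum -/

/-- The Dougall summand at `b = c = d = -1/2`, `a = m - 1/2`, divided by its closed form (up to
a constant). -/
noncomputable def A (m k : ℕ) : ℝ :=
  (4 * k + 2 * m - 1) * poch (-1 / 2) (m + k) * poch (-1 / 2) k ^ 3 / (k ! * (m + k)! ^ 3) *
    (poch (3 / 2) m ^ 3 / (m + 1)!)

/-- The WZ companion of `A`. -/
noncomputable def GA (m k : ℕ) : ℝ :=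
  (2 * k + 4 * m + 3) / (m + 2) * k * poch (-1 / 2) (m + k) * poch (-1 / 2) k ^ 3 /
    (k ! * (m + k)! ^ 3) * (poch (3 / 2) m ^ 3 / (m + 1)!)

lemma wz_A (m k : ℕ) : A (m + 1) k - A m k = GA m (k + 1) - GA m k := by
  unfold A GA
  rw [show m + 1 + k = m + k + 1 by ring, show m + (k + 1) = m + k + 1 by ring]
  simp only [poch_succ, factorial_succ]
  have h1 := factorial_ne m
  have h2 := factorial_ne k
  have h3 := factorial_ne (m + k)
  generalize poch (-1 / 2) (m + k) = x, poch (-1 / 2) k = y, poch (3 / 2) m = z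
  push_cast
  generalize (m ! : ℝ) = a at *
  generalize (k ! : ℝ) = b at *
  generalize ((m + k)! : ℝ) = c at *
  have h4 : (m : ℝ) + k + 1 ≠ 0 := by positivity
  have h5 : (m : ℝ) + 1 ≠ 0 := by positivity
  have h6 : (m : ℝ) + 2 ≠ 0 := by positivity
  have h7 : (m : ℝ) + 1 + 1 ≠ 0 := by positivity
  have h8 : (k : ℝ) + 1 ≠ 0 := by positivity
  field_simp
  ring

lemma factorial_mul_le (m k : ℕ) : (k ! * m ! : ℝ) ≤ (m + k)! := by
  rw [mul_comm]
  exact_mod_cast Nat.le_of_dvd (factorial_pos _) (factorial_mul_factorial_dvd_factorial_add m k)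

lemma core_A_le (m k : ℕ) : |poch (-1 / 2) (m + k) * poch (-1 / 2) k ^ 3 / (k ! * (m + k)! ^ 3)|
    ≤ 1 / ((m + k + 1) * (k + 1) ^ 3) * ((k ! : ℝ) / (m + k)!) ^ 2 := by
  have h1 := abs_poch_neg_half_le (m + k)
  have h2 := abs_poch_neg_half_le k
  rw [abs_div, abs_mul, abs_pow, abs_of_pos (a := (k ! * (m + k)! ^ 3 : ℝ)) (by positivity)]
  have h3 := factorial_ne k
  have h4 := factorial_ne (m + k)
  calc _ ≤ (((m + k)! : ℝ) / ((m + k : ℕ) + 1)) * (k ! / (k + 1)) ^ 3 / (k ! * (m + k)! ^ 3) := by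
        gcongr
    _ = _ := by
        push_cast
        field_simp

lemma abs_A_le (m k : ℕ) :
    |A m k| ≤ 4 * (poch (3 / 2) m ^ 3 / (m + 1)!) * ((k ! : ℝ) / (m + k)!) ^ 2 *
      (1 / (k + 1) ^ 3) := by
  have hq := poch_pos (x := 3 / 2) (by norm_num) m
  have hA : A m k = (4 * k + 2 * m - 1) *
      (poch (-1 / 2) (m + k) * poch (-1 / 2) k ^ 3 / (k ! * (m + k)! ^ 3)) *
      (poch (3 / 2) m ^ 3 / (m + 1)!) := by unfold A; ring
  rw [hA, abs_mul, abs_mul, abs_of_pos (a := poch (3 / 2) m ^ 3 / ((m + 1)! : ℝ)) (by positivity)]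
  have h1 : |(4 * k + 2 * m - 1 : ℝ)| ≤ 4 * (m + k + 1) := by
    have : (0 : ℝ) ≤ m := by positivity
    have : (0 : ℝ) ≤ k := by positivity
    rw [abs_le]; constructor <;> linarith
  calc _ ≤ 4 * (m + k + 1 : ℝ) * (1 / ((m + k + 1) * (k + 1) ^ 3) * ((k ! : ℝ) / (m + k)!) ^ 2) *
      (poch (3 / 2) m ^ 3 / (m + 1)!) := by
        gcongr
        exact core_A_le m k
    _ = _ := by field_simp

lemma summable_A (m : ℕ) : Summable (A m) := by
  refine Summable.of_norm_bounded (summable_cube.mul_left (4 * (poch (3 / 2) m ^ 3 / (m + 1)!)))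
    fun k => (abs_A_le m k).trans ?_
  have hq := poch_pos (x := 3 / 2) (by norm_num) m
  have h : (k ! : ℝ) / (m + k)! ≤ 1 :=
    div_le_one_of_le₀ (by exact_mod_cast factorial_le (by omega)) (by positivity)
  have h2 : ((k ! : ℝ) / (m + k)!) ^ 2 ≤ 1 := pow_le_one₀ (by positivity) h
  calc _ ≤ 4 * (poch (3 / 2) m ^ 3 / (m + 1)!) * 1 * (1 / (k + 1 : ℝ) ^ 3) := by gcongr
    _ = _ := by rw [mul_one]

lemma tendsto_GA (m : ℕ) : Tendsto (GA m) atTop (𝓝 0) := by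
  refine squeeze_zero_norm (fun k => ?_)
    (tendsto_const_div_sq (4 * (poch (3 / 2) m ^ 3 / (m + 1)!)))
  have hq := poch_pos (x := 3 / 2) (by norm_num) m
  have hA : GA m k = ((2 * k + 4 * m + 3) / (m + 2) * k) *
      (poch (-1 / 2) (m + k) * poch (-1 / 2) k ^ 3 / (k ! * (m + k)! ^ 3)) *
      (poch (3 / 2) m ^ 3 / (m + 1)!) := by unfold GA; ring
  rw [Real.norm_eq_abs, hA, abs_mul, abs_mul,
    abs_of_pos (a := poch (3 / 2) m ^ 3 / ((m + 1)! : ℝ)) (by positivity),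
    abs_of_nonneg (a := ((2 * k + 4 * m + 3) / (m + 2) * k : ℝ)) (by positivity)]
  have h : (k ! : ℝ) / (m + k)! ≤ 1 :=
    div_le_one_of_le₀ (by exact_mod_cast factorial_le (by omega)) (by positivity)
  have h2 : ((k ! : ℝ) / (m + k)!) ^ 2 ≤ 1 := pow_le_one₀ (by positivity) h
  have h3 : ((2 * k + 4 * m + 3) / (m + 2) * k : ℝ) ≤ 4 * (m + k + 1) * (k + 1) := by
    have h4 : ((2 * k + 4 * m + 3) / (m + 2) : ℝ) ≤ 4 * (m + k + 1) := by
      rw [div_le_iff₀ (by positivity)]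
      have : (0 : ℝ) ≤ m := by positivity
      have : (0 : ℝ) ≤ k := by positivity
      nlinarith [mul_nonneg ‹(0 : ℝ) ≤ m› ‹(0 : ℝ) ≤ k›]
    gcongr
    linarith
  calc _ ≤ (4 * (m + k + 1) * (k + 1) : ℝ) * (1 / ((m + k + 1) * (k + 1) ^ 3) * 1) *
      (poch (3 / 2) m ^ 3 / (m + 1)!) := by
        gcongr
        exact (core_A_le m k).trans (by gcongr)
    _ = _ := by field_simp

/-- The companion vanishes at `k = 0`, so the normalised Dougall sum does not depend on `m`. -/
lemma tsum_A_const (m : ℕ) : ∑' k, A m k = ∑' k, A 0 k := by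
  induction m with
  | zero => rfl
  | succ m ih =>
    have h := tsum_succ_sub (summable_A m) (summable_A (m + 1)) (wz_A m) (tendsto_GA m)
    have h0 : GA m 0 = 0 := by simp [GA]
    rw [h0] at h
    linarith

lemma wallis_eq (m : ℕ) : Real.Wallis.W m * poch (3 / 2) m ^ 2 = (2 * m + 1) * (m ! : ℝ) ^ 2 := by
  induction m with
  | zero => simp [poch_zero, Real.Wallis.W]
  | succ m ih =>
    rw [Real.Wallis.W_succ, poch_succ, factorial_succ]
    push_cast
    have : (2 * (m : ℝ) + 1) ≠ 0 := by positivity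
    have : (2 * (m : ℝ) + 3) ≠ 0 := by positivity
    calc _ = (Real.Wallis.W m * poch (3 / 2) m ^ 2) *
          ((2 * m + 2) / (2 * m + 1) * ((2 * m + 2) / (2 * m + 3)) * (3 / 2 + m) ^ 2) := by ring
      _ = _ := by
        rw [ih]
        field_simp
        ring

lemma A_zero (m : ℕ) : A m 0 = -((2 * m + 1) / (m + 1)) / Real.Wallis.W m ^ 2 := by
  have hW := Real.Wallis.W_pos m
  have h1 := wallis_eq m
  have h2 := poch_half_eq m
  have h3 := poch_three_halves_eq m
  have hq := poch_pos (x := 3 / 2) (by norm_num) m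
  have h4 := factorial_ne m
  have e : (2 * m - 1) * poch (-1 / 2) m = -(poch (3 / 2) m / (2 * m + 1)) := by
    rw [h3, h2]; field_simp
  have eW : Real.Wallis.W m = (2 * m + 1) * (m ! : ℝ) ^ 2 / poch (3 / 2) m ^ 2 := by
    rw [eq_div_iff (by positivity), h1]
  have : A m 0 = ((2 * m - 1) * poch (-1 / 2) m) / m ! ^ 3 * (poch (3 / 2) m ^ 3 / (m + 1)!) := by
    simp [A, poch_zero]
  rw [this, e, eW, factorial_succ]
  push_cast
  field_simp

lemma tendsto_two_mul_add_one_div :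
    Tendsto (fun m : ℕ => ((2 * m + 1) / (m + 1) : ℝ)) atTop (𝓝 2) := by
  have h := (tendsto_one_div_add_atTop_nhds_zero_nat (𝕜 := ℝ)).const_sub 2
  rw [sub_zero] at h
  refine h.congr fun m => ?_
  field_simp
  ring

lemma tendsto_A_zero : Tendsto (fun m => A m 0) atTop (𝓝 (-8 / Real.pi ^ 2)) := by
  have h := tendsto_two_mul_add_one_div.neg.div (Real.Wallis.tendsto_W_nhds_pi_div_two.pow 2)
    (by positivity)
  have e : -(2 : ℝ) / (Real.pi / 2) ^ 2 = -8 / Real.pi ^ 2 := by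
    field_simp
    norm_num
  rw [e] at h
  exact h.congr fun m => (A_zero m).symm

lemma tendsto_poch_div : Tendsto (fun m => poch (3 / 2) m / ((m + 1)! : ℝ)) atTop (𝓝 0) := by
  have h := (tendsto_two_mul_add_one_div.div Real.Wallis.tendsto_W_nhds_pi_div_two (by positivity)).mul
    (tendsto_one_div_add_atTop_nhds_zero_nat (𝕜 := ℝ))
  rw [mul_zero] at h
  have h2 : Tendsto (fun m => (poch (3 / 2) m / ((m + 1)! : ℝ)) ^ 2) atTop (𝓝 0) := by
    refine h.congr fun m => ?_
    have hW := Real.Wallis.W_pos m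
    have hq := poch_pos (x := 3 / 2) (by norm_num) m
    have h4 := factorial_ne m
    have eW : Real.Wallis.W m = (2 * m + 1) * (m ! : ℝ) ^ 2 / poch (3 / 2) m ^ 2 := by
      rw [eq_div_iff (by positivity), wallis_eq m]
    simp only [Pi.div_apply]
    rw [eW, factorial_succ]
    push_cast
    field_simp
  have h3 := h2.sqrt
  rw [Real.sqrt_zero] at h3
  refine h3.congr fun m => Real.sqrt_sq ?_
  have hq := poch_pos (x := 3 / 2) (by norm_num) m
  positivity

lemma abs_A_succ_le (m k : ℕ) :
    |A m (k + 1)| ≤ 4 * (poch (3 / 2) m / (m + 1)!) ^ 3 * (1 / (k + 1) ^ 3) := by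
  have hq := poch_pos (x := 3 / 2) (by norm_num) m
  refine (abs_A_le m (k + 1)).trans ?_
  -- `(k+1)! m! / (m+k+1)! ≤ 1 / (m+1)`, the inverse of a binomial coefficient
  have h : ((k + 1)! : ℝ) / (m + (k + 1))! ≤ 1 / (m + 1)! := by
    rw [div_le_div_iff₀ (by positivity) (by positivity), one_mul]
    have : (k + 1)! * (m + 1)! ≤ (m + (k + 1))! := by
      clear hq
      induction k with
      | zero => simp
      | succ k ih =>
        rw [factorial_succ (k + 1), show m + (k + 1 + 1) = m + (k + 1) + 1 by ring,
          factorial_succ (m + (k + 1)), mul_assoc]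
        exact Nat.mul_le_mul (by omega) ih
    exact_mod_cast this
  calc _ ≤ 4 * (poch (3 / 2) m ^ 3 / (m + 1)!) * (1 / ((m + 1)! : ℝ)) ^ 2 *
      (1 / ((k : ℝ) + 1) ^ 3) := by
        gcongr
        linarith
    _ = _ := by
        have := factorial_ne (m + 1)
        field_simp

/-- Dougall's sum at `a = b = c = d = -1/2`: as `m → ∞` the normalised series degenerates to its
first term, whose limit is Wallis' product. -/
lemma tsum_A_zero : ∑' k, A 0 k = -8 / Real.pi ^ 2 := by
  have htail : Tendsto (fun m => ∑' k, A m (k + 1)) atTop (𝓝 0) := by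
    have h := ((tendsto_poch_div.pow 3).const_mul 4).mul_const (∑' k : ℕ, 1 / ((k : ℝ) + 1) ^ 3)
    norm_num only at h
    refine squeeze_zero_norm (fun m => ?_) (by simpa using h)
    exact tsum_of_norm_bounded
      (by simpa using summable_cube.hasSum.mul_left (4 * (poch (3 / 2) m / (m + 1)!) ^ 3))
      (by simpa using abs_A_succ_le m)
  have h := tendsto_A_zero.add htail
  rw [add_zero] at h
  refine tendsto_nhds_unique (tendsto_const_nhds.congr fun m => ?_) h
  rw [← tsum_A_const m, (summable_A m).tsum_eq_zero_add]

/-! ### Acceleration -/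

/-- The Dougall summand at index `2 n + k` and `a = b = c = d = -1/2 - n`, divided by its closed
form (up to a constant). -/
noncomputable def F (n k : ℕ) : ℝ :=
  (-1) ^ n * (6 * n + 4 * k - 1) * (poch (-1 / 2) (n + k) / (2 * n + k)!) ^ 4 *
    (poch (3 / 2) n ^ 6 / (2 * n + 1)!)

/-- The numerator of the certificate of the WZ pair `(F, G)`, found by solving the linear system
for a polynomial in `k` of degree `6`; its total degree in `(n, k)` is also `6`. -/
noncomputable def certPoly (n k : ℝ) : ℝ :=
  (-99 - 540 * n + 2956 * n ^ 2 + 17888 * n ^ 3 + 36144 * n ^ 4 + 34368 * n ^ 5 + 13120 * n ^ 6)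
  + (-204 + 4696 * n + 29472 * n ^ 2 + 70848 * n ^ 3 + 80960 * n ^ 4 + 36736 * n ^ 5) * k
  + (1760 + 15104 * n + 49920 * n ^ 2 + 74752 * n ^ 3 + 42496 * n ^ 4) * k ^ 2
  + (2240 + 14976 * n + 34048 * n ^ 2 + 26112 * n ^ 3) * k ^ 3
  + (1680 + 7744 * n + 9024 * n ^ 2) * k ^ 4
  + (704 + 1664 * n) * k ^ 5 + 128 * k ^ 6

/-- The WZ companion of `F`. -/
noncomputable def G (n k : ℕ) : ℝ :=
  (-1) ^ n * (certPoly n k / (128 * (n + 1))) * (poch (-1 / 2) (n + k) / (2 * n + k + 1)!) ^ 4 *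
    (poch (3 / 2) n ^ 6 / (2 * n + 1)!)

lemma wz_F (n k : ℕ) : F (n + 1) k - F n k = G n (k + 1) - G n k := by
  unfold F G certPoly
  rw [show n + 1 + k = n + k + 1 by ring, show n + (k + 1) = n + k + 1 by ring,
    show 2 * (n + 1) + k = 2 * n + k + 1 + 1 by ring, show 2 * n + (k + 1) = 2 * n + k + 1 by ring,
    show 2 * (n + 1) + 1 = 2 * n + 1 + 1 + 1 by ring]
  simp only [poch_succ, factorial_succ, pow_succ (-1 : ℝ) n]
  have h1 := factorial_ne (2 * n)
  have h3 := factorial_ne (2 * n + k)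
  generalize poch (-1 / 2) (n + k) = x, poch (3 / 2) n = z, (-1 : ℝ) ^ n = s
  push_cast
  generalize ((2 * n)! : ℝ) = a at *
  generalize ((2 * n + k)! : ℝ) = c at *
  field_simp
  ring

/-- The exponent is the total degree of `certPoly`, the constant exceeds what its coefficients
require. -/
lemma abs_certPoly_le (n k : ℕ) : |certPoly n k| ≤ 13120 * 10 * (n + k + 1 : ℝ) ^ 6 := by
  have hn : (0 : ℝ) ≤ n := by positivity
  have hk : (0 : ℝ) ≤ k := by positivity
  generalize (n : ℝ) = n at *
  generalize (k : ℝ) = k at *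
  rw [abs_le]
  constructor
  · rw [← sub_nonneg]; unfold certPoly; ring_nf; positivity
  · rw [← sub_nonneg]; unfold certPoly; ring_nf; positivity

lemma tendsto_G (n : ℕ) : Tendsto (G n) atTop (𝓝 0) := by
  refine squeeze_zero_norm (fun k => ?_)
    (tendsto_const_div_sq (13120 * 10 * (poch (3 / 2) n ^ 6 / (2 * n + 1)!)))
  have hq := poch_pos (x := 3 / 2) (by norm_num) n
  have h1 : |certPoly n k / (128 * (n + 1))| ≤ 13120 * 10 * (n + k + 1 : ℝ) ^ 6 := by
    rw [abs_div]
    refine (_root_.div_le_self (abs_nonneg _) ?_).trans (abs_certPoly_le n k)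
    rw [abs_of_pos (by positivity)]
    have : (0 : ℝ) ≤ n := by positivity
    linarith
  have h2 : |poch (-1 / 2) (n + k) / (2 * n + k + 1)!| ≤ 1 / (n + k + 1 : ℝ) ^ 2 := by
    rw [abs_div, abs_of_pos (a := ((2 * n + k + 1)! : ℝ)) (by positivity)]
    have h3 : ((n + k + 1)! : ℝ) ≤ (2 * n + k + 1)! := by
      exact_mod_cast factorial_le (by omega)
    have h4 := factorial_ne (n + k)
    calc _ ≤ ((n + k)! / ((n + k : ℕ) + 1) : ℝ) / (n + k + 1)! := by
          gcongr
          exact abs_poch_neg_half_le _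
      _ = _ := by
          rw [factorial_succ]
          push_cast
          field_simp
  unfold G
  rw [Real.norm_eq_abs, abs_mul, abs_mul, abs_mul, abs_pow, abs_neg, abs_one, one_pow, one_mul,
    abs_pow, abs_of_pos (a := poch (3 / 2) n ^ 6 / ((2 * n + 1)! : ℝ)) (by positivity)]
  calc _ ≤ 13120 * 10 * (n + k + 1 : ℝ) ^ 6 * (1 / (n + k + 1 : ℝ) ^ 2) ^ 4 *
      (poch (3 / 2) n ^ 6 / (2 * n + 1)!) := by gcongr
    _ = 13120 * 10 * (poch (3 / 2) n ^ 6 / (2 * n + 1)!) / (n + k + 1 : ℝ) ^ 2 := by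
        field_simp
    _ ≤ _ := by
        gcongr
        have : (0 : ℝ) ≤ n := by positivity
        linarith

/-- The `n`-dependent factor in the bound for `F`. -/
noncomputable def E (n : ℕ) : ℝ := (n ! / (2 * n)!) ^ 4 * (poch (3 / 2) n ^ 6 / (2 * n + 1)!)

lemma E_le (n : ℕ) : E n ≤ (1 / 2) ^ n := by
  induction n with
  | zero => simp [E, poch_zero]
  | succ n ih =>
    have hq := poch_pos (x := 3 / 2) (by norm_num) n
    have h0 : 0 ≤ E n := by unfold E; positivity
    have e : E (n + 1) = E n * ((2 * n + 3) ^ 5 / (1024 * (2 * n + 1) ^ 4 * (2 * n + 2))) := by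
      unfold E
      rw [show 2 * (n + 1) = 2 * n + 1 + 1 by ring]
      simp only [poch_succ, factorial_succ]
      have h1 := factorial_ne (2 * n)
      have h3 := factorial_ne n
      push_cast
      field_simp
      ring
    rw [e, pow_succ (1 / 2 : ℝ) n]
    refine mul_le_mul ih ?_ (by positivity) (by positivity)
    rw [div_le_div_iff₀ (by positivity) (by positivity), ← sub_nonneg]
    ring_nf
    positivity

lemma abs_F_le (n k : ℕ) : |F n k| ≤ 6 * E n * (1 / (k + 1) ^ 3) := by
  have hq := poch_pos (x := 3 / 2) (by norm_num) n
  have hn : (0 : ℝ) ≤ n := by positivity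
  have hk : (0 : ℝ) ≤ k := by positivity
  have h1 : |(6 * n + 4 * k - 1 : ℝ)| ≤ 6 * (n + k + 1) := by
    rw [abs_le]; constructor <;> linarith
  have h3 : ((n + k)! / (2 * n + k)! : ℝ) ≤ n ! / (2 * n)! := by
    rw [div_le_div_iff₀ (by positivity) (by positivity)]
    have : (n + k)! * (2 * n)! ≤ n ! * (2 * n + k)! := by
      clear * -
      induction k with
      | zero => simp
      | succ k ih =>
        rw [← add_assoc, ← add_assoc, factorial_succ (n + k), factorial_succ (2 * n + k), mul_assoc,
          mul_left_comm (n !)]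
        exact Nat.mul_le_mul (by omega) ih
    exact_mod_cast this
  have h2 : |poch (-1 / 2) (n + k) / (2 * n + k)!| ≤ n ! / (2 * n)! / (n + k + 1 : ℝ) := by
    rw [abs_div, abs_of_pos (a := ((2 * n + k)! : ℝ)) (by positivity)]
    calc _ ≤ ((n + k)! / ((n + k : ℕ) + 1) : ℝ) / (2 * n + k)! := by
          gcongr
          exact abs_poch_neg_half_le _
      _ = (n + k)! / (2 * n + k)! / (n + k + 1 : ℝ) := by push_cast; ring
      _ ≤ _ := by gcongr
  unfold F
  rw [abs_mul, abs_mul, abs_mul, abs_pow, abs_neg, abs_one, one_pow, one_mul,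
    abs_pow, abs_of_pos (a := poch (3 / 2) n ^ 6 / ((2 * n + 1)! : ℝ)) (by positivity)]
  calc _ ≤ 6 * (n + k + 1 : ℝ) * (n ! / (2 * n)! / (n + k + 1 : ℝ)) ^ 4 *
      (poch (3 / 2) n ^ 6 / (2 * n + 1)!) := by gcongr
    _ = 6 * E n * (1 / (n + k + 1 : ℝ) ^ 3) := by
        unfold E
        field_simp
    _ ≤ _ := by
        have h0 : 0 ≤ E n := by unfold E; positivity
        gcongr
        linarith

lemma summable_F (n : ℕ) : Summable (F n) :=
  Summable.of_norm_bounded (summable_cube.mul_left (6 * E n)) (abs_F_le n)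

lemma tendsto_tsum_F : Tendsto (fun n => ∑' k, F n k) atTop (𝓝 0) := by
  have h := ((tendsto_pow_atTop_nhds_zero_of_lt_one (r := (1 / 2 : ℝ)) (by norm_num)
    (by norm_num)).const_mul 6).mul_const (∑' k : ℕ, 1 / ((k : ℝ) + 1) ^ 3)
  rw [mul_zero, zero_mul] at h
  refine squeeze_zero_norm (fun n => ?_) h
  refine (tsum_of_norm_bounded (summable_cube.hasSum.mul_left (6 * E n)) (abs_F_le n)).trans ?_
  have := E_le n
  have h0 : 0 ≤ ∑' k : ℕ, 1 / ((k : ℝ) + 1) ^ 3 := tsum_nonneg fun k => by positivity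
  gcongr

/-! ### The series -/

/-- The summand of the series. -/
noncomputable def term (k : ℕ) : ℝ :=
  (-1/1024 : ℝ) ^ k * (poch (-1/2) k) ^ 3 * (poch (1/2) k) ^ 2 / (poch 1 k) ^ 5 *
    (6560 * (k : ℝ) ^ 5 - 528 * (k : ℝ) ^ 4 + 176 * (k : ℝ) ^ 3 + 8 * (k : ℝ) ^ 2 - 6 * k - 1)

/-- The Gosper antidifference of the discrepancy between `term n` and `G n 0`. -/
noncomputable def T (n : ℕ) : ℝ :=
  (-1/1024 : ℝ) ^ n * poch (-1/2) n ^ 4 * poch (1/2) n / (n ! : ℝ) ^ 5 *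
    (-256 * n ^ 4 * (52 * n ^ 2 - 28 * n + 5))

/-- The boundary terms `G n 0` of the WZ pair agree with the summand of the series up to a
telescoping difference. -/
lemma G_zero_add_T (n : ℕ) : G n 0 + T n - T (n + 1) = term n := by
  unfold G T term certPoly
  simp only [poch_one, poch_succ, factorial_succ, add_zero, factorial_two_mul, cast_mul,
    poch_three_halves_eq, pow_succ (-1 / 1024 : ℝ) n]
  have hs : (-1 / 1024 : ℝ) ^ n = (-1) ^ n / (4 ^ n) ^ 5 := by
    rw [div_pow, ← pow_mul, mul_comm n 5, pow_mul]; norm_num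
  rw [hs]
  have h1 := factorial_ne n
  have h2 := (poch_pos (x := 1 / 2) (by norm_num) n).ne'
  have h3 : (4 : ℝ) ^ n ≠ 0 := by positivity
  -- everything is now expressed through `poch (-1/2) n`, `n!`, `4 ^ n` and `(-1) ^ n`
  rw [poch_half_eq] at *
  have h4 := right_ne_zero_of_mul h2
  have h5 := left_ne_zero_of_mul h2
  have h6 : (2 * n - 1 : ℝ) ≠ 0 := fun h => h5 (by rw [h, neg_zero])
  generalize poch (-1 / 2) n = x at *
  generalize (n ! : ℝ) = a at *
  generalize (4 : ℝ) ^ n = b at *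
  generalize (-1 : ℝ) ^ n = s at *
  push_cast
  field_simp
  ring

lemma add_one_sq_le (n : ℕ) : ((n : ℝ) + 1) ^ 2 ≤ 4 ^ n := by
  have : n + 1 ≤ 2 ^ n := Nat.lt_two_pow_self
  have h : ((n : ℝ) + 1) ≤ 2 ^ n := by exact_mod_cast this
  calc ((n : ℝ) + 1) ^ 2 ≤ (2 ^ n) ^ 2 := by gcongr
    _ = 4 ^ n := by rw [← pow_mul, mul_comm, pow_mul]; norm_num

lemma abs_term_le (n : ℕ) : |term n| ≤ 10000 * (1 / 256) ^ n := by
  have hp := abs_poch_neg_half_le n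
  have hh := poch_half_le n
  have hh0 := poch_pos (x := 1 / 2) (by norm_num) n
  have hf := factorial_ne n
  have h1 : |(6560 * (n : ℝ) ^ 5 - 528 * (n : ℝ) ^ 4 + 176 * (n : ℝ) ^ 3 + 8 * (n : ℝ) ^ 2
      - 6 * n - 1)| ≤ 10000 * (n + 1 : ℝ) ^ 5 := by
    have hn : (0 : ℝ) ≤ n := by positivity
    generalize (n : ℝ) = n at *
    rw [abs_le]
    constructor
    · rw [← sub_nonneg]; ring_nf; positivity
    · rw [← sub_nonneg]; ring_nf; positivity
  unfold term
  rw [poch_one, abs_mul, abs_div, abs_mul, abs_mul, abs_pow, abs_pow,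
    abs_of_nonneg (a := poch (1 / 2) n ^ 2) (by positivity),
    abs_of_nonneg (a := (n ! : ℝ) ^ 5) (by positivity),
    show |(-1 / 1024 : ℝ)| = 1 / 1024 by norm_num [abs_of_neg]]
  calc _ ≤ (1 / 1024 : ℝ) ^ n * (n ! / (n + 1)) ^ 3 * (n ! : ℝ) ^ 2 / (n ! : ℝ) ^ 5 *
        (10000 * (n + 1) ^ 5) := by gcongr
    _ = 10000 * (1 / 1024 : ℝ) ^ n * (n + 1) ^ 2 := by field_simp
    _ ≤ 10000 * (1 / 1024 : ℝ) ^ n * 4 ^ n := by gcongr; exact add_one_sq_le n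
    _ = _ := by rw [mul_assoc, ← mul_pow]; norm_num

lemma abs_T_le (n : ℕ) : |T n| ≤ 256 * 85 * (1 / 256) ^ n := by
  have hp := abs_poch_neg_half_le n
  have hh := poch_half_le n
  have hh0 := poch_pos (x := 1 / 2) (by norm_num) n
  have hf := factorial_ne n
  have h1 : |(-256 * n ^ 4 * (52 * n ^ 2 - 28 * n + 5) : ℝ)| ≤ 256 * 85 * (n + 1) ^ 6 := by
    have hn : (0 : ℝ) ≤ n := by positivity
    generalize (n : ℝ) = n at *
    rw [abs_le]
    constructor
    · rw [← sub_nonneg]; ring_nf; positivity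
    · rw [← sub_nonneg]; ring_nf; positivity
  unfold T
  rw [abs_mul, abs_div, abs_mul, abs_mul, abs_pow, abs_pow,
    abs_of_nonneg (a := poch (1 / 2) n) (by positivity),
    abs_of_nonneg (a := (n ! : ℝ) ^ 5) (by positivity),
    show |(-1 / 1024 : ℝ)| = 1 / 1024 by norm_num [abs_of_neg]]
  calc _ ≤ (1 / 1024 : ℝ) ^ n * (n ! / (n + 1)) ^ 4 * (n ! : ℝ) / (n ! : ℝ) ^ 5 *
        (256 * 85 * (n + 1) ^ 6) := by gcongr
    _ = 256 * 85 * (1 / 1024 : ℝ) ^ n * (n + 1) ^ 2 := by field_simp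
    _ ≤ 256 * 85 * (1 / 1024 : ℝ) ^ n * 4 ^ n := by gcongr; exact add_one_sq_le n
    _ = _ := by rw [mul_assoc, ← mul_pow]; norm_num

lemma tendsto_T : Tendsto T atTop (𝓝 0) := by
  have h := (tendsto_pow_atTop_nhds_zero_of_lt_one (r := (1 / 256 : ℝ)) (by norm_num)
    (by norm_num)).const_mul (256 * 85)
  rw [mul_zero] at h
  exact squeeze_zero_norm abs_T_le h

lemma summable_term : Summable term :=
  Summable.of_norm_bounded ((summable_geometric_of_lt_one (r := (1 / 256 : ℝ)) (by norm_num)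
    (by norm_num)).mul_left 10000) abs_term_le

lemma sum_term (N : ℕ) :
    ∑ n ∈ Finset.range N, term n = -8 / Real.pi ^ 2 - (∑' k, F N k + T N) := by
  induction N with
  | zero =>
    -- at `n = 0` the accelerated family starts from Dougall's series
    have : ∀ k, F 0 k = A 0 k := fun k => by
      simp only [F, A, poch_zero]
      have := factorial_ne k
      simp
      field_simp
    simp [this, tsum_A_zero, T]
  | succ N ih =>
    have h := tsum_succ_sub (summable_F N) (summable_F (N + 1)) (wz_F N) (tendsto_G N)
    rw [Finset.sum_range_succ, ih, ← G_zero_add_T]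
    linarith

lemma hasSum_term : HasSum term (-8 / Real.pi ^ 2) := by
  have h : Tendsto (fun N => ∑ n ∈ Finset.range N, term n) atTop (𝓝 (-8 / Real.pi ^ 2)) := by
    simp only [sum_term]
    simpa using (tendsto_tsum_F.add tendsto_T).const_sub (-8 / Real.pi ^ 2)
  exact tendsto_nhds_unique summable_term.hasSum.tendsto_sum_nat h ▸ summable_term.hasSum

end DougallWZ

theorem series_motivating2 :
    HasSum
      (fun k : ℕ =>
        (-1/1024 : ℝ) ^ k * (poch (-1/2) k) ^ 3 * (poch (1/2) k) ^ 2 / (poch 1 k) ^ 5 *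
          (6560 * (k : ℝ) ^ 5 - 528 * (k : ℝ) ^ 4 + 176 * (k : ℝ) ^ 3 + 8 * (k : ℝ) ^ 2
            - 6 * k - 1))
      (-8 / Real.pi ^ 2) := by
  exact DougallWZ.hasSum_term
end
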